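/- For every integer c ≥ 0 and every (r,s,t,u) ∈ S_{0,c} (i.e., r,s,t,u ∈ ℤ_{≥0} with u ≥ t, 2r ≥ s, 2t − s − u ≥ 0 and c − r + s − t ≥ 0), the coefficient C^{0,c}_{r,s,t,u} admits the closed product form C^{0,c}_{r,s,t,u} = [(q²)_{2r} / ((q²)_s·(q²)_{2t−s−u}·(q²)_{2r−s})] · [(q⁴)_c / ((q⁴)_r·(q⁴)_{u−t}·(q⁴)_{c−r+s−t})]. -/

import Mathlib

noncomputable section

/-- The field `K = ℚ(q)` of rational functions in `q` over `ℚ`. -/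
abbrev K : Type := RatFunc ℚ

/-- The variable `q ∈ K = ℚ(q)`. -/
def q : K := RatFunc.X

open Finset in
/-- The q-Pochhammer symbol `(a;p)_n = ∏_{j<n} (1 − a·p^j)`. -/
def poch (a p : K) (n : ℕ) : K := ∏ j ∈ range n, (1 - a * p ^ j)

/-- `(q²)_n = (q²;q²)_n`. -/
def q2p (n : ℕ) : K := poch (q ^ 2) (q ^ 2) n

/-- `(q⁴)_n = (q⁴;q⁴)_n`. -/
def q4p (n : ℕ) : K := poch (q ^ 4) (q ^ 4) n

/-- `Ξ_{α,β,γ}` (depending also on `b,c,r,s,t,u`). -/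
def Xi (b c r s t u a β γ : ℕ) : K :=
  q2p (b + t - (s + a)) * q2p (2 * r + β - s) * q4p (c + s - (r + β)) * q4p (c + γ)
  / (q2p a * q2p β * q2p γ * q2p (u - (t + a)) * q2p (t - β)
     * q2p (b + β - (s + a)) * q2p (s - (β + γ)) * q4p (c + γ - r))

/-- `φ_C(α,β,γ) = α(α+1+2t) + β(β−1−2α+2b−4r) + γ(γ−1−4r)`. -/
def phiC (b r t a β γ : ℕ) : ℤ :=
  (a : ℤ) * ((a : ℤ) + 1 + 2 * t) + (β : ℤ) * ((β : ℤ) - 1 - 2 * a + 2 * b - 4 * r)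
    + (γ : ℤ) * ((γ : ℤ) - 1 - 4 * r)

open Finset in
/-- The inner sum in `C^{b,c}_{r,s,t,u}`, over `(α,β,γ) ∈ ℤ_{≥0}³` with
`α ≤ u−t`, `β ≤ t`, `α−β ≤ b−s`, `β+γ ≤ s`, `γ ≥ r−c`. -/
def Csum (b c r s t u : ℕ) : K :=
  ∑ p ∈ ((range (u - t + 1)) ×ˢ (range (t + 1)) ×ˢ (range (s + 1))).filter
      (fun p => p.1 + t ≤ u ∧ p.2.1 ≤ t ∧ p.1 + s ≤ p.2.1 + b ∧
        p.2.1 + p.2.2 ≤ s ∧ r ≤ p.2.2 + c),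
    (-1 : K) ^ (p.2.1 + p.2.2) * q ^ phiC b r t p.1 p.2.1 p.2.2
      * Xi b c r s t u p.1 p.2.1 p.2.2

/-- The coefficient `C^{b,c}_{r,s,t,u}`. -/
def Cbc (b c r s t u : ℕ) : K :=
  (q2p b * q2p (u - t)
      / (q2p (b + 2 * t - (s + u)) * q2p (2 * r - s) * q4p r * q4p (u - t)
         * q4p (c + s - (r + t))))
    * ((-1 : K) ^ s * q ^ ((s : ℤ) * (4 * (r : ℤ) - (s : ℤ) + 1)) * Csum b c r s t u)

/-!
For `b = 0` the constraints `α + s ≤ β` and `β + γ ≤ s` leave only `(α, β, γ) = (0, s, 0)`.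
There `φ_C = -ψ(r, s)`, so the signs and powers of `q` cancel against the prefactor. Since `q`
is not a root of unity, no `(q²)_n` or `(q⁴)_n` vanishes, and the quotients of these simplify.
-/

theorem q_ne_zero : q ≠ 0 := RatFunc.X_ne_zero

theorem not_isOfFinOrder_ratFunc_X (F : Type*) [Field F] :
    ¬ IsOfFinOrder (RatFunc.X : RatFunc F) := by
  intro h
  obtain ⟨n, hn, hpow⟩ := h.exists_pow_eq_one
  exact RatFunc.transcendental_X (.of_pow hn (hpow ▸ isAlgebraic_one))

theorem not_isOfFinOrder_q : ¬ IsOfFinOrder q := not_isOfFinOrder_ratFunc_X ℚ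

theorem poch_zero (a p : K) : poch a p 0 = 1 := Finset.prod_range_zero _

theorem poch_self_ne_zero {p : K} (hp : ¬ IsOfFinOrder p) (n : ℕ) : poch p p n ≠ 0 := by
  refine Finset.prod_ne_zero_iff.mpr fun j _ hj ↦ hp ?_
  rw [sub_eq_zero, ← pow_succ'] at hj
  exact isOfFinOrder_iff_pow_eq_one.mpr ⟨j + 1, j.succ_pos, hj.symm⟩

theorem q2p_zero : q2p 0 = 1 := poch_zero _ _

theorem q2p_ne_zero (n : ℕ) : q2p n ≠ 0 :=
  poch_self_ne_zero (fun h ↦ not_isOfFinOrder_q (h.of_pow two_ne_zero)) n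

theorem q4p_ne_zero (n : ℕ) : q4p n ≠ 0 :=
  poch_self_ne_zero (fun h ↦ not_isOfFinOrder_q (h.of_pow four_ne_zero)) n

theorem phiC_zero_self (r s t : ℕ) :
    phiC 0 r t 0 s 0 = -((s : ℤ) * (4 * (r : ℤ) - (s : ℤ) + 1)) := by
  unfold phiC
  push_cast
  ring

theorem Xi_zero_self (c r s t u : ℕ) :
    Xi 0 c r s t u 0 s 0 = q2p (2 * r) * q4p c / (q2p s * q2p (u - t)) := by
  simp only [Xi, zero_add, add_zero, Nat.add_sub_cancel, Nat.add_sub_add_right, Nat.sub_self,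
    q2p_zero]
  field_simp [q2p_ne_zero, q4p_ne_zero]

theorem Csum_zero {c r s t u : ℕ} (htu : t ≤ u) (hst : s ≤ t) (hrc : r ≤ c) :
    Csum 0 c r s t u = (-1 : K) ^ s * q ^ phiC 0 r t 0 s 0 * Xi 0 c r s t u 0 s 0 := by
  refine Finset.sum_eq_single_of_mem (0, s, 0) ?mem fun ⟨α, β, γ⟩ hmem hne ↦ absurd ?eq hne
  case mem =>
    simp only [Finset.mem_filter, Finset.mem_product, Finset.mem_range]
    omega
  case eq =>
    simp only [Finset.mem_filter, Finset.mem_product, Finset.mem_range] at hmem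
    simp only [Prod.mk.injEq]
    omega

theorem sign_mul_zpow_mul_Csum_zero {c r s t u : ℕ} (htu : t ≤ u) (hst : s ≤ t) (hrc : r ≤ c) :
    (-1 : K) ^ s * q ^ ((s : ℤ) * (4 * (r : ℤ) - (s : ℤ) + 1)) * Csum 0 c r s t u =
      q2p (2 * r) * q4p c / (q2p s * q2p (u - t)) := by
  have hsign : (-1 : K) ^ s * (-1) ^ s = 1 := by rw [← mul_pow, neg_one_mul, neg_neg, one_pow]
  have hpow : q ^ ((s : ℤ) * (4 * (r : ℤ) - (s : ℤ) + 1)) * q ^ phiC 0 r t 0 s 0 = 1 := by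
    rw [phiC_zero_self, ← zpow_add₀ q_ne_zero, add_neg_cancel, zpow_zero]
  calc
    _ = ((-1 : K) ^ s * (-1) ^ s) *
          (q ^ ((s : ℤ) * (4 * (r : ℤ) - (s : ℤ) + 1)) * q ^ phiC 0 r t 0 s 0) *
          Xi 0 c r s t u 0 s 0 := by
      rw [Csum_zero htu hst hrc]
      ring
    _ = q2p (2 * r) * q4p c / (q2p s * q2p (u - t)) := by
      rw [hsign, hpow, one_mul, one_mul, Xi_zero_self]

/-- closed product form of `C^{0,c}_{r,s,t,u}` for `(r,s,t,u) ∈ S_{0,c}`. -/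
theorem C0c_closed (c r s t u : ℕ) (h1 : t ≤ u) (h2 : s ≤ 2 * r)
    (h3 : s + u ≤ 2 * t) (h4 : r + t ≤ c + s) :
    Cbc 0 c r s t u =
      (q2p (2 * r) / (q2p s * q2p (2 * t - (s + u)) * q2p (2 * r - s)))
        * (q4p c / (q4p r * q4p (u - t) * q4p (c + s - (r + t)))) := by
  have hst : s ≤ t := by omega
  have hrc : r ≤ c := by omega
  rw [Cbc, sign_mul_zpow_mul_Csum_zero h1 hst hrc, q2p_zero, zero_add]
  field_simp [q2p_ne_zero, q4p_ne_zero]
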